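/- arXiv:1808.04642 — 2 statements merged into one kernel-verified Lean document; each statement's English description precedes it below -/
import Mathlib

section
/- Let (W,U,N) be a polarity, ε an order type over n, R an f-type relation with order type ε, and 1 ≤ i ≤ n with ε(i) = ∂. Suppose that for every j ≠ i the set X_j ⊆ W^ε(j) is Galois-stable. Then for every Y ⊆ U, R⁰[X̄ⁱ_Y] = R⁰[X̄ⁱ_{(Y↓)↑}]. (Lemma 3.5, item 1(ii).) -/
universe u

/-- For `X ⊆ W`, `up N X = X↑ = {u ∈ U : N x u for all x ∈ X}`. -/
def up {W U : Type u} (N : W → U → Prop) (X : Set W) : Set U := {u | ∀ x ∈ X, N x u}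

/-- For `Y ⊆ U`, `dn N Y = Y↓ = {w ∈ W : N w u for all u ∈ Y}`. -/
def dn {W U : Type u} (N : W → U → Prop) (Y : Set U) : Set W := {w | ∀ u ∈ Y, N w u}

/-- A subset `X ⊆ W` is Galois-stable if `X = (X↑)↓`. -/
def stableW {W U : Type u} (N : W → U → Prop) (X : Set W) : Prop := X = dn N (up N X)

/-- A subset `Y ⊆ U` is Galois-stable if `Y = (Y↓)↑`. -/
def stableU {W U : Type u} (N : W → U → Prop) (Y : Set U) : Prop := Y = up N (dn N Y)

/-- `coordType W U b` is `W` if `b = true` (order type 1) and `U` if `b = false` (order type ∂). -/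
def coordType (W U : Type u) (b : Bool) : Type u := cond b W U

/-- `S⁰[C̄] = {a : (a, b̄) ∈ S for all b̄ ∈ C₁ × ⋯ × Cₙ}`. -/
def rel0 {A : Type u} {n : ℕ} {B : Fin n → Type u} (S : A → (∀ i, B i) → Prop)
    (C : ∀ i, Set (B i)) : Set A :=
  {a | ∀ b : ∀ i, B i, (∀ i, b i ∈ C i) → S a b}

/-- `Sⁱ[A', C̄ⁱ] = {x ∈ B i : (a, b̄ⁱ_x) ∈ S for all a ∈ A' and all b_j ∈ C_j (j ≠ i)}`
(the `i`-th entry of `C` is ignored). -/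
def reli {A : Type u} {n : ℕ} {B : Fin n → Type u} (S : A → (∀ i, B i) → Prop)
    (i : Fin n) (A' : Set A) (C : ∀ j, Set (B j)) : Set (B i) :=
  {x | ∀ a ∈ A', ∀ b : ∀ j, B j, (∀ j, j ≠ i → b j ∈ C j) → S a (Function.update b i x)}

/-- Galois-stability for a subset of `W^ε(i)` (as a subset of `W` or of `U` accordingly). -/
def coordStable {W U : Type u} (N : W → U → Prop) :
    (b : Bool) → Set (coordType W U b) → Prop
  | true, X => stableW N X
  | false, Y => stableU N Y

/-- `R` is an f-type relation with order type `ε`: `R ⊆ U × W^ε(1) × ⋯ × W^ε(n)` such that the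
sets `R⁰[{w̄}]` and `Rⁱ[{u}, {w̄}ⁱ]` are all Galois-stable. -/
def isFType {W U : Type u} (N : W → U → Prop) {n : ℕ} (ε : Fin n → Bool)
    (R : U → (∀ i, coordType W U (ε i)) → Prop) : Prop :=
  (∀ w : ∀ i, coordType W U (ε i),
    stableU N (rel0 R fun i => ({w i} : Set (coordType W U (ε i))))) ∧
  (∀ (u : U) (w : ∀ i, coordType W U (ε i)) (i : Fin n),
    coordStable N (ε i) (reli R i {u} fun j => ({w j} : Set (coordType W U (ε j)))))

/-- The Galois closure on subsets of `W^ε(i)`: `(·↑)↓` on subsets of `W`, `(·↓)↑` on subsets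
of `U`. -/
def coordCl {W U : Type u} (N : W → U → Prop) :
    (b : Bool) → Set (coordType W U b) → Set (coordType W U b)
  | true, X => dn N (up N X)
  | false, Y => up N (dn N Y)

theorem subset_coordCl {W U : Type u} (N : W → U → Prop) :
    ∀ (b : Bool) (Z : Set (coordType W U b)), Z ⊆ coordCl N b Z
  | true, _ => fun _ hz _ hu => hu _ hz
  | false, _ => fun _ hz _ hw => hw _ hz

theorem coordCl_subset_of_coordStable {W U : Type u} (N : W → U → Prop) :
    ∀ (b : Bool) {Z T : Set (coordType W U b)}, coordStable N b T → Z ⊆ T → coordCl N b Z ⊆ T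
  | true, _, T, hT, hZT => by
    intro x hx
    have hT' : T = dn N (up N T) := hT
    rw [hT']
    exact fun u hu => hx u fun z hz => hu z (hZT hz)
  | false, _, T, hT, hZT => by
    intro x hx
    have hT' : T = up N (dn N T) := hT
    rw [hT']
    exact fun w hw => hx w fun z hz => hw z (hZT hz)

theorem rel0_anti {A : Type u} {n : ℕ} {B : Fin n → Type u} (S : A → (∀ i, B i) → Prop)
    {C D : ∀ i, Set (B i)} (h : ∀ i, C i ⊆ D i) : rel0 S D ⊆ rel0 S C :=
  fun _ ha b hb => ha b fun i => h i (hb i)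

/-- Lemma 3.5, item 1(ii): if `ε(i) = ∂` and `X_j` is Galois-stable for all `j ≠ i`, then for
every `Y ⊆ U`, `R⁰[X̄ⁱ_Y] = R⁰[X̄ⁱ_{(Y↓)↑}]`. -/
theorem fType_rel0_closure_partial {W U : Type u} (N : W → U → Prop) {n : ℕ} (ε : Fin n → Bool)
    (R : U → (∀ i, coordType W U (ε i)) → Prop) (hR : isFType N ε R)
    (i : Fin n) (hi : ε i = false)
    (X : ∀ j, Set (coordType W U (ε j)))
    (hX : ∀ j, j ≠ i → coordStable N (ε j) (X j))
    (Y : Set (coordType W U (ε i))) :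
    rel0 R (Function.update X i Y) = rel0 R (Function.update X i (coordCl N (ε i) Y)) := by
  apply subset_antisymm
  · intro u hu b hb
    have hY : Y ⊆ reli R i {u} fun j => ({b j} : Set (coordType W U (ε j))) := by
      rintro y hy _ rfl c hc
      refine hu _ fun j => ?_
      rcases eq_or_ne j i with rfl | hj
      · simpa using hy
      · have hbj := hb j
        rw [Function.update_of_ne hj] at hbj ⊢
        rw [Function.update_of_ne hj, Set.mem_singleton_iff.mp (hc j hj)]
        exact hbj
    have hbi : b i ∈ coordCl N (ε i) Y := by simpa using hb i
    have hub := coordCl_subset_of_coordStable N (ε i) (hR.2 u b i) hY hbi u rfl b fun _ _ => rfl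
    rwa [Function.update_eq_self] at hub
  · refine rel0_anti R fun j => ?_
    rcases eq_or_ne j i with rfl | hj
    · simpa using subset_coordCl N (ε j) Y
    · simp [Function.update_of_ne hj]
end

section
/- Let (W,U,N) be a polarity, ε an order type over n, g : U^ε(1) × ⋯ × U^ε(n) → U a function admitting residual functions k_i as in the context, and R the relation defined by (w, ū) ∈ R iff (w, g(ū)) ∈ N. Then for every w ∈ W and every tuple ū: R⁰[{ū}] = ({g(ū)})↓, and for each 1 ≤ i ≤ n, Rⁱ[{w}, {ū}ⁱ] equals ({k_i(ūⁱ,w)})↑ if ε(i) = 1 and equals ({k_i(ūⁱ,w)})↓ if ε(i) = ∂. In particular all these sets are Galois-stable, so R is a g-type relation with order type ε. (Content of Proposition 4.3 for functional relations, dual case.) -/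
universe u

/-- Galois-stability for a subset of `U^ε(i)` (as a subset of `U` or of `W` accordingly). -/
def coordStableG {W U : Type u} (N : W → U → Prop) :
    (b : Bool) → Set (coordType U W b) → Prop
  | true, Y => stableU N Y
  | false, X => stableW N X

/-- `R` is a g-type relation with order type `ε`: `R ⊆ W × U^ε(1) × ⋯ × U^ε(n)` such that the
sets `R⁰[{ū}]` and `Rⁱ[{w}, {ū}ⁱ]` are all Galois-stable. -/
def isGType {W U : Type u} (N : W → U → Prop) {n : ℕ} (ε : Fin n → Bool)
    (R : W → (∀ i, coordType U W (ε i)) → Prop) : Prop :=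
  (∀ v : ∀ i, coordType U W (ε i),
    stableW N (rel0 R fun i => ({v i} : Set (coordType U W (ε i))))) ∧
  (∀ (w : W) (v : ∀ i, coordType U W (ε i)) (i : Fin n),
    coordStableG N (ε i) (reli R i {w} fun j => ({v j} : Set (coordType U W (ε j)))))

/-- `pairNG N (ε i) u k` is `(k_i(ūⁱ,w), u_i) ∈ N` if `ε(i) = 1`, and `(u_i, k_i(ūⁱ,w)) ∈ N`
if `ε(i) = ∂`. -/
def pairNG {W U : Type u} (N : W → U → Prop) :
    (b : Bool) → coordType U W b → coordType W U b → Prop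
  | true, v, w => N w v
  | false, w, v => N w v

/-- The Galois-stable set `{k_i(ūⁱ,w)}↑` (if `ε(i) = 1`) or `{k_i(ūⁱ,w)}↓` (if `ε(i) = ∂`). -/
def singG {W U : Type u} (N : W → U → Prop) :
    (b : Bool) → coordType W U b → Set (coordType U W b)
  | true, w => up N {w}
  | false, v => dn N {v}

theorem stableW_dn {W U : Type u} (N : W → U → Prop) (Y : Set U) : stableW N (dn N Y) :=
  Set.Subset.antisymm (fun _ hw _ hu => hu _ hw) fun _ hw u hu => hw u fun _ hx => hx u hu

theorem stableU_up {W U : Type u} (N : W → U → Prop) (X : Set W) : stableU N (up N X) :=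
  Set.Subset.antisymm (fun _ hu _ hw => hw _ hu) fun _ hu w hw => hu w fun _ hy => hy w hw

theorem coordStableG_singG {W U : Type u} (N : W → U → Prop) (b : Bool) (c : coordType W U b) :
    coordStableG N b (singG N b c) := by
  cases b
  · exact stableW_dn N _
  · exact stableU_up N _

theorem mem_singG_iff {W U : Type u} (N : W → U → Prop) (b : Bool) (c : coordType W U b)
    (x : coordType U W b) : x ∈ singG N b c ↔ pairNG N b x c := by
  cases b
  · exact ⟨fun h => h c rfl, fun h _ hy => Set.mem_singleton_iff.mp hy ▸ h⟩
  · exact ⟨fun h => h c rfl, fun h _ hy => Set.mem_singleton_iff.mp hy ▸ h⟩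

theorem rel0_singleton {A : Type u} {n : ℕ} {B : Fin n → Type u} (S : A → (∀ i, B i) → Prop)
    (v : ∀ i, B i) : rel0 S (fun i => {v i}) = {a | S a v} := by
  ext a
  refine ⟨fun h => h v fun _ => rfl, fun h b hb => ?_⟩
  obtain rfl : b = v := funext hb
  exact h

theorem reli_singleton {A : Type u} {n : ℕ} {B : Fin n → Type u} (S : A → (∀ i, B i) → Prop)
    (i : Fin n) (a : A) (v : ∀ i, B i) :
    reli S i {a} (fun j => {v j}) = {x | S a (Function.update v i x)} := by
  ext x
  refine ⟨fun h => h a rfl v fun _ _ => rfl, ?_⟩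
  rintro h _ rfl b hb
  have hbv : Function.update b i x = Function.update v i x := by
    funext j
    by_cases hj : j = i
    · subst hj
      simp
    · simpa [hj] using hb j hj
  rw [hbv]
  exact h

/-- Proposition 4.3 (functional relations, `g` case): if `g` admits residual functions `k_i`,
and `R` is defined by `(w, ū) ∈ R iff (w, g(ū)) ∈ N`, then `R⁰[{ū}] = ({g(ū)})↓`,
`Rⁱ[{w}, {ū}ⁱ] = ({k_i(ūⁱ,w)})↑` if `ε(i) = 1` and `= ({k_i(ūⁱ,w)})↓` if `ε(i) = ∂`; in
particular `R` is a g-type relation with order type `ε`. -/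
theorem functional_is_gType {W U : Type u} (N : W → U → Prop) {n : ℕ} (ε : Fin n → Bool)
    (g : (∀ i, coordType U W (ε i)) → U)
    (k : ∀ i : Fin n,
      ((∀ j : {j : Fin n // j ≠ i}, coordType U W (ε j.1)) → W → coordType W U (ε i)))
    (hres : ∀ (i : Fin n) (v : ∀ j, coordType U W (ε j)) (w : W),
      N w (g v) ↔ pairNG N (ε i) (v i) (k i (fun j => v j.1) w)) :
    (∀ v : ∀ i, coordType U W (ε i),
      rel0 (fun (w : W) v' => N w (g v'))
          (fun i => ({v i} : Set (coordType U W (ε i)))) = dn N {g v}) ∧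
    (∀ (w : W) (v : ∀ i, coordType U W (ε i)) (i : Fin n),
      reli (fun (w' : W) v' => N w' (g v')) i {w}
          (fun j => ({v j} : Set (coordType U W (ε j))))
        = singG N (ε i) (k i (fun j => v j.1) w)) ∧
    isGType N ε (fun (w : W) v' => N w (g v')) := by
  have h0 (v : ∀ i, coordType U W (ε i)) :
      rel0 (fun (w : W) v' => N w (g v'))
        (fun i => ({v i} : Set (coordType U W (ε i)))) = dn N {g v} := by
    rw [rel0_singleton]
    ext w
    simp [dn]
  have hi (w : W) (v : ∀ i, coordType U W (ε i)) (i : Fin n) :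
      reli (fun (w' : W) v' => N w' (g v')) i {w}
        (fun j => ({v j} : Set (coordType U W (ε j))))
          = singG N (ε i) (k i (fun j => v j.1) w) := by
    rw [reli_singleton]
    ext x
    have hv : (fun j : {j : Fin n // j ≠ i} => Function.update v i x j.1) =
        fun j : {j : Fin n // j ≠ i} => v j.1 :=
      funext fun j => Function.update_of_ne j.2 x v
    rw [mem_singG_iff, Set.mem_ofPred_eq, hres i, hv, Function.update_self]
  refine ⟨h0, hi, fun v => ?_, fun w v i => ?_⟩
  · rw [h0]
    exact stableW_dn N _
  · rw [hi]
    exact coordStableG_singG N _ _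
end
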